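/- In the r-state i.i.d. model, if m(n) = ⌈c·n^{2/(r−1)+α}⌉ and l(n) = ⌈c'·n^{2/(r−1)+α}⌉ for some constants c > 0, c' > 0 and α > 0, then user 1 has no privacy at every time k ∈ {1, …, m}: the infimum, over all estimators X̃_1(k) that are measurable functions of (W, Y), of the error probability P(X̃_1(k) ≠ X_1(k)) tends to 0 as n → ∞. -/

import Mathlib

open MeasureTheory ProbabilityTheory Filter
open scoped ENNReal NNReal

/-- Discrete measure on `Fin r` assigning mass `q i` to the point `i`. -/
noncomputable def catMeasure (r : ℕ) (q : Fin r → ℝ) : Measure (Fin r) :=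
  ∑ i : Fin r, ENNReal.ofReal (q i) • Measure.dirac i

/-- Extend a parameter vector `(p 1, …, p (r-1))` (probabilities of the values `1, …, r-1`)
to a full probability vector on `{0, 1, …, r-1}`, value `0` receiving the remaining mass. -/
noncomputable def fullProb (r : ℕ) (p : Fin (r - 1) → ℝ) : Fin r → ℝ := fun i =>
  if h : (i : ℕ) = 0 then 1 - ∑ j, p j
  else p ⟨(i : ℕ) - 1, by have := i.isLt; omega⟩

/-- The open region `{x ∈ (0,1)^d : xᵢ > 0, x₁ + ⋯ + x_d < 1}` of admissible parameters. -/
def simplexRegion (d : ℕ) : Set (Fin d → ℝ) :=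
  {x | (∀ i, 0 < x i) ∧ ∑ i, x i < 1}

/-- Joint law of (parameters, actual traces, training traces) in the `r`-state i.i.d. model:
the parameter vectors `p u` are i.i.d. with law `μP`, and conditionally on the parameters the
`n` actual traces (of length `m`) and training traces (of length `l`) consist of i.i.d.
samples from `{0, …, r-1}` where value `i ≥ 1` has probability `p u i` and value `0` the
remaining probability; all traces are mutually independent. -/
noncomputable def rStateLaw (n m l r : ℕ) (μP : Measure (Fin (r - 1) → ℝ)) :
    Measure ((Fin n → Fin (r - 1) → ℝ) × (Fin n → Fin m → Fin r) × (Fin n → Fin l → Fin r)) :=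
  (Measure.pi fun _ : Fin n => μP).bind fun p =>
    (Measure.dirac p).prod
      ((Measure.pi fun u : Fin n =>
          Measure.pi fun _ : Fin m => catMeasure r (fullProb r (p u))).prod
        (Measure.pi fun u : Fin n =>
          Measure.pi fun _ : Fin l => catMeasure r (fullProb r (p u))))

/-- Empirical frequency of the value `i` in a trace. -/
noncomputable def frq {r m : ℕ} (x : Fin m → Fin r) (i : Fin r) : ℝ :=
  (∑ t, if x t = i then (1 : ℝ) else 0) / m

lemma hoeff {r m : ℕ} (hm : 0 < m) (ν : Measure (Fin r)) [IsProbabilityMeasure ν] (i : Fin r)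
    {ε : ℝ} (hε : 0 < ε) :
    (Measure.pi fun _ : Fin m => ν) {x | ε ≤ |frq x i - ν.real {i}|}
      ≤ ENNReal.ofReal (2 * Real.exp (-2 * m * ε ^ 2)) := by
  set M := Measure.pi fun _ : Fin m => ν with hM
  let h : Fin r → ℝ := fun y => if y = i then (1 : ℝ) else 0
  have hint : ∫ y, h y ∂ν = ν.real {i} := by
    have : h = Set.indicator {i} 1 := by
      ext y; simp [h, Set.indicator]
    rw [this, integral_indicator_one (by measurability)]
  have hsub : HasSubgaussianMGF (fun y => h y - ν.real {i}) ((‖(1:ℝ) - 0‖₊ / 2) ^ 2) ν := by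
    rw [← hint]
    refine hasSubgaussianMGF_of_mem_Icc (measurable_of_countable h).aemeasurable ?_
    refine Filter.Eventually.of_forall fun y => ?_
    simp only [h]; split_ifs <;> simp
  have hind : iIndepFun (fun (t : Fin m) (x : Fin m → Fin r) => h (x t) - ν.real {i}) M :=
    iIndepFun_pi (X := fun _ y => h y - ν.real {i})
      fun _ => (measurable_of_countable _).aemeasurable
  have hind' : iIndepFun (fun (t : Fin m) (x : Fin m → Fin r) => -(h (x t) - ν.real {i})) M :=
    iIndepFun_pi (X := fun _ y => -(h y - ν.real {i}))
      fun _ => (measurable_of_countable _).aemeasurable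
  have hs : ∀ t : Fin m, HasSubgaussianMGF (fun x : Fin m → Fin r => h (x t) - ν.real {i})
      ((‖(1:ℝ) - 0‖₊ / 2) ^ 2) M := by
    intro t
    refine HasSubgaussianMGF.of_map (X := fun y => h y - ν.real {i})
      (Y := fun x : Fin m → Fin r => x t) (measurable_pi_apply t).aemeasurable ?_
    rw [hM, (measurePreserving_eval (fun _ : Fin m => ν) t).map_eq]
    exact hsub
  have hmε : (0:ℝ) ≤ m * ε := by positivity
  have hm' : (0:ℝ) < m := by exact_mod_cast hm
  have e : -((m:ℝ) * ε) ^ 2 / (2 * ((∑ _t : Fin m, (‖(1:ℝ) - 0‖₊ / 2) ^ 2 : ℝ≥0) : ℝ))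
      = -2 * m * ε ^ 2 := by
    simp; field_simp
  have b1 := HasSubgaussianMGF.measure_sum_ge_le_of_iIndepFun hind (s := Finset.univ)
    (fun t _ => hs t) hmε
  have b2 := HasSubgaussianMGF.measure_sum_ge_le_of_iIndepFun hind' (s := Finset.univ)
    (fun t _ => (hs t).neg) hmε
  rw [e] at b1 b2
  have hsubset : {x : Fin m → Fin r | ε ≤ |frq x i - ν.real {i}|} ⊆
      {x | m * ε ≤ ∑ t, (h (x t) - ν.real {i})} ∪ {x | m * ε ≤ ∑ t, -(h (x t) - ν.real {i})} := by
    intro x hx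
    have key : ∑ t, (h (x t) - ν.real {i}) = m * (frq x i - ν.real {i}) := by
      simp only [frq, h, Finset.sum_sub_distrib, Finset.sum_const, Finset.card_univ,
        Fintype.card_fin, nsmul_eq_mul]
      field_simp
    simp only [Set.mem_union, Set.mem_ofPred_eq, Finset.sum_neg_distrib, key]
    rcases le_abs.1 (show ε ≤ |frq x i - ν.real {i}| from hx) with h1 | h1
    · left; exact mul_le_mul_of_nonneg_left h1 hm'.le
    · right; rw [← mul_neg]; exact mul_le_mul_of_nonneg_left h1 hm'.le
  rw [← ofReal_measureReal]
  refine ENNReal.ofReal_le_ofReal ?_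
  refine (measureReal_mono hsubset).trans ((measureReal_union_le _ _).trans ?_)
  linarith

instance (r : ℕ) (q : Fin r → ℝ) : IsFiniteMeasure (catMeasure r q) := by
  unfold catMeasure; constructor
  simp [Measure.finsetSum_apply, ENNReal.sum_lt_top]

lemma cat_prob {r : ℕ} {q : Fin r → ℝ} (h0 : ∀ i, 0 ≤ q i) (h1 : ∑ i, q i = 1) :
    IsProbabilityMeasure (catMeasure r q) := by
  constructor
  simp [catMeasure, Measure.finsetSum_apply]
  rw [← ENNReal.ofReal_sum_of_nonneg (fun i _ => h0 i), h1, ENNReal.ofReal_one]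

lemma cat_real {r : ℕ} {q : Fin r → ℝ} (h0 : ∀ i, 0 ≤ q i) (i : Fin r) :
    (catMeasure r q).real {i} = q i := by
  simp [catMeasure, Measure.real, Measure.finsetSum_apply, Set.indicator_apply, h0]

lemma fullProb_nonneg {r : ℕ} {p : Fin (r - 1) → ℝ} (hp : p ∈ simplexRegion (r - 1)) (i : Fin r) :
    0 ≤ fullProb r p i := by
  unfold fullProb
  split_ifs
  · linarith [hp.2]
  · exact (hp.1 _).le

lemma fullProb_sum {r : ℕ} (hr : 2 ≤ r) (p : Fin (r - 1) → ℝ) :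
    ∑ i, fullProb r p i = 1 := by
  obtain ⟨d, rfl⟩ : ∃ d, r = d + 1 := ⟨r - 1, by omega⟩
  rw [Fin.sum_univ_succ]
  simp [fullProb]

lemma fullProb_succ {r : ℕ} (p : Fin (r - 1) → ℝ) (j : Fin (r - 1)) :
    fullProb r p ⟨j + 1, by omega⟩ = p j := by
  simp [fullProb]

lemma fullProb_meas {r : ℕ} (i : Fin r) : Measurable fun p : Fin (r - 1) → ℝ => fullProb r p i := by
  unfold fullProb
  split_ifs <;> fun_prop

lemma simplex_meas (d : ℕ) : MeasurableSet (simplexRegion d) := by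
  unfold simplexRegion
  have h : MeasurableSet {x : Fin d → ℝ | ∑ i, x i < 1} :=
    measurableSet_lt (by fun_prop) measurable_const
  have h' : MeasurableSet {x : Fin d → ℝ | ∀ i, 0 < x i} :=
    by
    have e : {x : Fin d → ℝ | ∀ i, 0 < x i} = ⋂ i, {x | 0 < x i} := by ext; simp
    rw [e]
    exact MeasurableSet.iInter fun i => measurableSet_lt measurable_const (measurable_pi_apply i)
  exact h'.inter h

/-- `μP` of a sup-norm ball. -/
lemma muP_ball {d : ℕ} (f : (Fin d → ℝ) → ℝ) (δ₂ : ℝ) (hδ : 0 ≤ δ₂)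
    (hf : ∀ x, f x ≤ δ₂) (x : Fin d → ℝ) {ε : ℝ} (hε : 0 < ε) :
    (volume.withDensity fun x => ENNReal.ofReal (f x)) (Metric.ball x ε)
      ≤ ENNReal.ofReal (δ₂ * (2 * ε) ^ d) := by
  rw [withDensity_apply _ Metric.isOpen_ball.measurableSet]
  calc _ ≤ ∫⁻ _ in Metric.ball x ε, ENNReal.ofReal δ₂ :=
        lintegral_mono fun y => ENNReal.ofReal_le_ofReal (hf y)
    _ = _ := by
        rw [setLIntegral_const, Real.volume_pi_ball x hε, ← ENNReal.ofReal_mul hδ]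
        simp

lemma pi_pair {n d : ℕ} (μP : Measure (Fin d → ℝ)) [IsProbabilityMeasure μP] {u v : Fin n}
    (huv : u ≠ v) {ε : ℝ} {b : ℝ≥0∞} (hb : ∀ x, μP (Metric.ball x ε) ≤ b) :
    (Measure.pi fun _ : Fin n => μP) {p | dist (p u) (p v) < ε} ≤ b := by
  have hind : iIndepFun (fun (t : Fin n) (x : Fin n → Fin d → ℝ) => x t)
      (Measure.pi fun _ : Fin n => μP) :=
    iIndepFun_pi (X := fun _ y => y) fun _ => aemeasurable_id
  have h2 := (indepFun_iff_map_prod_eq_prod_map_map (measurable_pi_apply v).aemeasurable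
    (measurable_pi_apply u).aemeasurable).1 (hind.indepFun huv.symm)
  rw [(measurePreserving_eval (fun _ : Fin n => μP) u).map_eq,
    (measurePreserving_eval (fun _ : Fin n => μP) v).map_eq] at h2
  have hT : MeasurableSet {z : (Fin d → ℝ) × (Fin d → ℝ) | dist z.2 z.1 < ε} :=
    measurableSet_lt (by fun_prop) measurable_const
  have : {p : Fin n → Fin d → ℝ | dist (p u) (p v) < ε} =
      (fun p => (p v, p u)) ⁻¹' {z | dist z.2 z.1 < ε} := rfl
  rw [this, ← Measure.map_apply (by fun_prop) hT, h2, Measure.prod_apply hT]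
  calc _ ≤ ∫⁻ _, b ∂μP := lintegral_mono fun x => hb x
    _ = b := by simp

/-- The bad event. -/
def badSet (n m l r : ℕ) (u₀ : Fin n) (ε : ℝ) :
    Set ((Fin n → Fin (r - 1) → ℝ) × (Fin n → Fin m → Fin r) × (Fin n → Fin l → Fin r)) :=
  {z | (∃ u, u ≠ u₀ ∧ dist (z.1 u) (z.1 u₀) < 4 * ε) ∨
    (∃ u i, ε ≤ |frq (z.2.1 u) i - fullProb r (z.1 u) i|) ∨
    ∃ i, ε ≤ |frq (z.2.2 u₀) i - fullProb r (z.1 u₀) i|}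

lemma badSet_meas (n m l r : ℕ) (u₀ : Fin n) (ε : ℝ) : MeasurableSet (badSet n m l r u₀ ε) := by
  have hfr : ∀ (m' : ℕ) (i : Fin r), Measurable fun x : Fin m' → Fin r => frq x i :=
    fun m' i => measurable_of_countable _
  have e : badSet n m l r u₀ ε =
      (⋃ u, ⋃ (_ : u ≠ u₀), {z | dist (z.1 u) (z.1 u₀) < 4 * ε}) ∪
      ((⋃ u, ⋃ i, {z | ε ≤ |frq (z.2.1 u) i - fullProb r (z.1 u) i|}) ∪
      ⋃ i, {z | ε ≤ |frq (z.2.2 u₀) i - fullProb r (z.1 u₀) i|}) := by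
    ext z; simp [badSet]
  rw [e]
  refine MeasurableSet.union ?_ (MeasurableSet.union ?_ ?_)
  · exact MeasurableSet.iUnion fun u => MeasurableSet.iUnion fun _ =>
      measurableSet_lt (by fun_prop) measurable_const
  · refine MeasurableSet.iUnion fun u => MeasurableSet.iUnion fun i =>
      measurableSet_le measurable_const ?_
    have h1 : Measurable fun z : (Fin n → Fin (r - 1) → ℝ) × (Fin n → Fin m → Fin r) ×
        (Fin n → Fin l → Fin r) => frq (z.2.1 u) i := (hfr m i).comp (by fun_prop)
    have h2 : Measurable fun z : (Fin n → Fin (r - 1) → ℝ) × (Fin n → Fin m → Fin r) ×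
        (Fin n → Fin l → Fin r) => fullProb r (z.1 u) i := (fullProb_meas i).comp (by fun_prop)
    exact measurable_norm.comp (h1.sub h2)
  · refine MeasurableSet.iUnion fun i => measurableSet_le measurable_const ?_
    have h1 : Measurable fun z : (Fin n → Fin (r - 1) → ℝ) × (Fin n → Fin m → Fin r) ×
        (Fin n → Fin l → Fin r) => frq (z.2.2 u₀) i := (hfr l i).comp (by fun_prop)
    have h2 : Measurable fun z : (Fin n → Fin (r - 1) → ℝ) × (Fin n → Fin m → Fin r) ×
        (Fin n → Fin l → Fin r) => fullProb r (z.1 u₀) i := (fullProb_meas i).comp (by fun_prop)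
    exact measurable_norm.comp (h1.sub h2)

lemma pi_hoeff {n m r : ℕ} (hr : 2 ≤ r) (hm : 0 < m) {p : Fin n → Fin (r - 1) → ℝ}
    (hp : ∀ u, p u ∈ simplexRegion (r - 1)) (u : Fin n) (i : Fin r) {ε : ℝ} (hε : 0 < ε) :
    (Measure.pi fun u : Fin n => Measure.pi fun _ : Fin m => catMeasure r (fullProb r (p u)))
      {x | ε ≤ |frq (x u) i - fullProb r (p u) i|}
      ≤ ENNReal.ofReal (2 * Real.exp (-2 * m * ε ^ 2)) := by
  have hprob : ∀ u, IsProbabilityMeasure (catMeasure r (fullProb r (p u))) := fun u =>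
    cat_prob (fullProb_nonneg (hp u)) (fullProb_sum hr _)
  have h := hoeff hm (catMeasure r (fullProb r (p u))) i hε
  rw [cat_real (fullProb_nonneg (hp u))] at h
  refine le_trans (le_of_eq ?_) h
  exact (measurePreserving_eval
    (fun u : Fin n => Measure.pi fun _ : Fin m => catMeasure r (fullProb r (p u))) u).measure_preimage
    (s := {x | ε ≤ |frq x i - fullProb r (p u) i|}) (Set.toFinite _).measurableSet.nullMeasurableSet

lemma law_bad {n m l r : ℕ} (hr : 2 ≤ r) (hm : 0 < m) (hl : 0 < l)
    (μP : Measure (Fin (r - 1) → ℝ)) [IsProbabilityMeasure μP]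
    (hs : ∀ᵐ x ∂μP, x ∈ simplexRegion (r - 1)) {b : ℝ≥0∞} {ε : ℝ} (hε : 0 < ε)
    (hb : ∀ x, μP (Metric.ball x (4 * ε)) ≤ b) (u₀ : Fin n) :
    rStateLaw n m l r μP (badSet n m l r u₀ ε) ≤
      n * b + (n * r * ENNReal.ofReal (2 * Real.exp (-2 * m * ε ^ 2)) +
        r * ENNReal.ofReal (2 * Real.exp (-2 * l * ε ^ 2))) := by
  set E := (n * r * ENNReal.ofReal (2 * Real.exp (-2 * m * ε ^ 2)) +
        r * ENNReal.ofReal (2 * Real.exp (-2 * l * ε ^ 2))) with hE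
  set C : Set (Fin n → Fin (r - 1) → ℝ) := ⋃ u, ⋃ (_ : u ≠ u₀), {p | dist (p u) (p u₀) < 4 * ε}
    with hC
  have hCm : MeasurableSet C := MeasurableSet.iUnion fun u => MeasurableSet.iUnion fun _ =>
      measurableSet_lt (by fun_prop) measurable_const
  have hCb : (Measure.pi fun _ : Fin n => μP) C ≤ n * b := by
    calc _ ≤ ∑ u : Fin n, (Measure.pi fun _ : Fin n => μP)
            (⋃ (_ : u ≠ u₀), {p | dist (p u) (p u₀) < 4 * ε}) := measure_iUnion_fintype_le _ _
      _ ≤ ∑ u : Fin n, b := by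
          refine Finset.sum_le_sum fun u _ => ?_
          by_cases hu : u = u₀
          · simp [hu]
          · simpa [hu] using pi_pair μP hu hb
      _ = n * b := by simp
  have hae : ∀ᵐ p ∂(Measure.pi fun _ : Fin n => μP), ∀ u, p u ∈ simplexRegion (r - 1) := by
    rw [ae_all_iff]
    intro u
    exact (measurePreserving_eval (fun _ : Fin n => μP) u).quasiMeasurePreserving.ae hs
  refine (Measure.bind_apply_le _ (badSet_meas n m l r u₀ ε)).trans ?_
  calc _ ≤ ∫⁻ p, (C.indicator 1 p + E) ∂(Measure.pi fun _ : Fin n => μP) := by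
        refine lintegral_mono_ae ?_
        filter_upwards [hae] with p hp
        have hprob : ∀ u, IsProbabilityMeasure (catMeasure r (fullProb r (p u))) := fun u =>
          cat_prob (fullProb_nonneg (hp u)) (fullProb_sum hr _)
        set A := Measure.pi fun u : Fin n =>
          Measure.pi fun _ : Fin m => catMeasure r (fullProb r (p u)) with hA
        set B := Measure.pi fun u : Fin n =>
          Measure.pi fun _ : Fin l => catMeasure r (fullProb r (p u)) with hB
        rw [Measure.dirac_prod, Measure.map_apply measurable_prodMk_left (badSet_meas n m l r u₀ ε)]
        by_cases hpC : p ∈ C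
        · rw [Set.indicator_of_mem hpC]
          exact prob_le_one.trans le_self_add
        rw [Set.indicator_of_notMem hpC, zero_add]
        have hsub : Prod.mk p ⁻¹' badSet n m l r u₀ ε ⊆
            (⋃ u, ⋃ i, {x | ε ≤ |frq (x u) i - fullProb r (p u) i|}) ×ˢ Set.univ ∪
            Set.univ ×ˢ ⋃ i, {x | ε ≤ |frq (x u₀) i - fullProb r (p u₀) i|} := by
          intro z hz
          rcases hz with hz | hz | hz
          · exact absurd (by simpa [hC] using hz) hpC
          · left; simpa using hz
          · right; simpa using hz
        refine (measure_mono hsub).trans ((measure_union_le _ _).trans ?_)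
        rw [Measure.prod_prod, Measure.prod_prod, measure_univ, measure_univ, mul_one, one_mul]
        refine add_le_add ?_ ?_
        · refine (measure_iUnion_fintype_le _ _).trans ?_
          calc _ ≤ ∑ u : Fin n, ∑ i : Fin r, ENNReal.ofReal (2 * Real.exp (-2 * m * ε ^ 2)) :=
                Finset.sum_le_sum fun u _ => (measure_iUnion_fintype_le _ _).trans
                  (Finset.sum_le_sum fun i _ => pi_hoeff hr hm hp u i hε)
            _ = _ := by simp [mul_assoc]
        · refine (measure_iUnion_fintype_le _ _).trans ?_
          calc _ ≤ ∑ i : Fin r, ENNReal.ofReal (2 * Real.exp (-2 * l * ε ^ 2)) :=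
                (Finset.sum_le_sum fun i _ => pi_hoeff hr hl hp u₀ i hε)
            _ = _ := by simp
    _ = (Measure.pi fun _ : Fin n => μP) C + E := by
        rw [lintegral_add_right _ measurable_const, lintegral_indicator_one hCm]; simp
    _ ≤ _ := by gcongr

/-- The adversary's estimator. -/
noncomputable def estim {n m l r : ℕ} (u₀ : Fin n) (k : Fin m) (ε : ℝ)
    (z : (Fin n → Fin l → Fin r) × (Fin n → Fin m → Fin r)) : Fin r :=
  open Classical in
  if h : ∃ v, ∀ i, |frq (z.2 v) i - frq (z.1 u₀) i| < 2 * ε then z.2 h.choose k else z.2 u₀ k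

lemma estim_good {n m l r : ℕ} (u₀ : Fin n) (k : Fin m) {ε : ℝ} (hε : 0 < ε)
    (p : Fin n → Fin (r - 1) → ℝ) (x : Fin n → Fin m → Fin r) (w : Fin n → Fin l → Fin r)
    (σ : Equiv.Perm (Fin n))
    (h : estim u₀ k ε (w, fun v => x (σ.symm v)) ≠ x u₀ k) : (p, x, w) ∈ badSet n m l r u₀ ε := by
  by_contra hb
  simp only [badSet, Set.mem_ofPred_eq, not_or, not_exists, not_and, not_le, not_lt] at hb
  obtain ⟨h1, h2, h3⟩ := hb
  have hex : ∃ v, ∀ i, |frq (x (σ.symm v)) i - frq (w u₀) i| < 2 * ε := by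
    refine ⟨σ u₀, fun i => ?_⟩
    rw [Equiv.symm_apply_apply]
    have a := abs_lt.1 (h2 u₀ i)
    have b := abs_lt.1 (h3 i)
    rw [abs_lt]; constructor <;> linarith
  apply h
  simp only [estim]
  rw [dif_pos hex]
  have hc := hex.choose_spec
  set v := hex.choose
  have : σ.symm v = u₀ := by
    by_contra hne
    have := h1 _ hne
    refine absurd this (not_le.2 ?_)
    rw [dist_pi_lt_iff (by positivity)]
    intro j
    have a := abs_lt.1 (h2 (σ.symm v) ⟨j + 1, by omega⟩)
    have b := abs_lt.1 (h3 ⟨j + 1, by omega⟩)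
    have c := abs_lt.1 (hc ⟨j + 1, by omega⟩)
    rw [fullProb_succ] at a b
    rw [Real.dist_eq, abs_lt]; constructor <;> linarith
  rw [this]

lemma tendsto_mul_exp {a s : ℝ} (ha : 0 < a) (hs : 0 < s) :
    Tendsto (fun n : ℕ => (n : ℝ) * Real.exp (-a * (n : ℝ) ^ s)) atTop (nhds 0) := by
  have h := (tendsto_rpow_mul_exp_neg_mul_atTop_nhds_zero s⁻¹ a ha).comp
    ((tendsto_rpow_atTop hs).comp tendsto_natCast_atTop_atTop)
  refine h.congr fun n => ?_
  simp only [Function.comp]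
  rw [Real.rpow_rpow_inv (Nat.cast_nonneg n) hs.ne']

lemma tendsto_exp' {a s : ℝ} (ha : 0 < a) (hs : 0 < s) :
    Tendsto (fun n : ℕ => Real.exp (-a * (n : ℝ) ^ s)) atTop (nhds 0) := by
  refine squeeze_zero' (Eventually.of_forall fun n => (Real.exp_pos _).le) ?_ (tendsto_mul_exp ha hs)
  filter_upwards [eventually_ge_atTop 1] with n hn
  have : (1:ℝ) ≤ n := by exact_mod_cast hn
  nlinarith [Real.exp_pos (-a * (n : ℝ) ^ s)]

/-- The matching scale. -/
noncomputable def epsn (d : ℕ) (α : ℝ) (n : ℕ) : ℝ := (n : ℝ) ^ (-(1 / (d : ℝ)) - α / 4)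

lemma epsn_pow {d : ℕ} (hd : 0 < d) (α : ℝ) {n : ℕ} (hn : 0 < n) :
    (n : ℝ) * epsn d α n ^ d = (n : ℝ) ^ (-(d * α / 4)) := by
  have hn' : (0:ℝ) < n := by exact_mod_cast hn
  have hd' : (0:ℝ) < d := by exact_mod_cast hd
  unfold epsn
  rw [← Real.rpow_natCast, ← Real.rpow_mul hn'.le]
  nth_rewrite 1 [← Real.rpow_one (n : ℝ)]
  rw [← Real.rpow_add hn']
  congr 1
  field_simp
  ring

lemma epsn_sq {d : ℕ} (hd : 0 < d) (α : ℝ) {n : ℕ} (hn : 0 < n) {c : ℝ} {m : ℕ}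
    (hm : m = ⌈c * (n : ℝ) ^ (2 / (d : ℝ) + α)⌉₊) :
    c * (n : ℝ) ^ (α / 2) ≤ m * epsn d α n ^ 2 := by
  have hn' : (0:ℝ) < n := by exact_mod_cast hn
  have hd' : (0:ℝ) < d := by exact_mod_cast hd
  have h1 : c * (n : ℝ) ^ (2 / (d : ℝ) + α) ≤ m := by rw [hm]; exact Nat.le_ceil _
  have h2 : (n : ℝ) ^ (α / 2) = (n : ℝ) ^ (2 / (d : ℝ) + α) * epsn d α n ^ 2 := by
    unfold epsn
    rw [← Real.rpow_natCast, ← Real.rpow_mul hn'.le, ← Real.rpow_add hn']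
    congr 1
    push_cast
    field_simp
    ring
  rw [h2, ← mul_assoc]
  gcongr

/-- **`r`-state i.i.d. model, no privacy.**  If `m n = ⌈c n^(2/(r-1)+α)⌉` and
`l n = ⌈c' n^(2/(r-1)+α)⌉` for some `c, c', α > 0`, then user 1 has no privacy at every
time `k`: the infimum over all estimators (measurable functions of the adversary's
observations `(W, Y)`, where `Y v = X (Π⁻¹ v)` is the anonymized data, taking values in
`{0, …, r-1}`) of the probability of incorrectly estimating `X_1(k)` tends to `0`
as `n → ∞`. -/
theorem r_state_no_privacy
    (r : ℕ) (hr : 2 ≤ r)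
    (f : (Fin (r - 1) → ℝ) → ℝ) (δ₁ δ₂ : ℝ) (hδ₁ : 0 < δ₁)
    (μP : Measure (Fin (r - 1) → ℝ)) [IsProbabilityMeasure μP]
    (hμP : μP = volume.withDensity fun x => ENNReal.ofReal (f x))
    (hf0 : ∀ x ∉ simplexRegion (r - 1), f x = 0)
    (hf : ∀ x ∈ simplexRegion (r - 1), δ₁ < f x ∧ f x < δ₂)
    (m l : ℕ → ℕ) (c c' α : ℝ) (hc : 0 < c) (hc' : 0 < c') (hα : 0 < α)
    (hm : ∀ n : ℕ, m n = ⌈c * (n : ℝ) ^ (2 / ((r : ℝ) - 1) + α)⌉₊)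
    (hl : ∀ n : ℕ, l n = ⌈c' * (n : ℝ) ^ (2 / ((r : ℝ) - 1) + α)⌉₊)
    (Ω : ℕ → Type) (mΩ : ∀ n, MeasurableSpace (Ω n))
    (μ : ∀ n, Measure (Ω n)) (hμ : ∀ n, IsProbabilityMeasure (μ n))
    (P : ∀ n, Ω n → Fin n → Fin (r - 1) → ℝ)
    (X : ∀ n, Ω n → Fin n → Fin (m n) → Fin r)
    (W : ∀ n, Ω n → Fin n → Fin (l n) → Fin r)
    (prm : ∀ n, Ω n → Equiv.Perm (Fin n))
    (hP : ∀ n, Measurable (P n)) (hX : ∀ n, Measurable (X n))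
    (hW : ∀ n, Measurable (W n))
    (hprm : ∀ n (σ : Equiv.Perm (Fin n)), MeasurableSet {ω | prm n ω = σ})
    -- `Π` is uniform on the `n!` permutations, independent of `(P, X, W)`, and
    -- `(P, X, W)` has the `r`-state i.i.d. law described above:
    (hjoint : ∀ n (σ : Equiv.Perm (Fin n))
        (s : Set ((Fin n → Fin (r - 1) → ℝ) ×
          (Fin n → Fin (m n) → Fin r) × (Fin n → Fin (l n) → Fin r))),
        MeasurableSet s →
        μ n {ω | prm n ω = σ ∧ (P n ω, X n ω, W n ω) ∈ s} =
          ((n.factorial : ℝ≥0∞))⁻¹ * rStateLaw n (m n) (l n) r μP s)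
    -- an arbitrary choice of a time `k n ∈ {1, …, m n}` for each `n`:
    (k : ∀ n : ℕ, 0 < n → Fin (m n)) :
    Tendsto (fun n =>
        if hn : 0 < n then
          sInf {e : ℝ |
            ∃ g : (Fin n → Fin (l n) → Fin r) × (Fin n → Fin (m n) → Fin r) → Fin r,
              Measurable g ∧
              e = (μ n {ω |
                    g (W n ω, fun v => X n ω ((prm n ω).symm v)) ≠ X n ω ⟨0, hn⟩ (k n hn)}).toReal}
        else 0)
      atTop (nhds 0) := by
  have hd : 0 < r - 1 := by omega
  have hcast : ((r - 1 : ℕ) : ℝ) = (r : ℝ) - 1 := by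
    rw [Nat.cast_sub (by omega)]; simp
  rw [← hcast] at hm hl
  have hf' : ∀ x, f x ≤ max δ₂ 0 := by
    intro x
    by_cases hx : x ∈ simplexRegion (r - 1)
    · exact (hf x hx).2.le.trans (le_max_left _ _)
    · rw [hf0 x hx]; exact le_max_right _ _
  set D := max δ₂ 0 with hD
  have hD0 : 0 ≤ D := le_max_right _ _
  have hs : ∀ᵐ x ∂μP, x ∈ simplexRegion (r - 1) := by
    rw [ae_iff, hμP]
    have : {a | a ∉ simplexRegion (r - 1)} = (simplexRegion (r - 1))ᶜ := rfl
    rw [this, withDensity_apply _ (simplex_meas (r - 1)).compl]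
    rw [setLIntegral_congr_fun (g := fun _ => 0) (simplex_meas (r - 1)).compl]
    · simp
    · intro x hx
      simp [hf0 x hx]
  set ε := epsn (r - 1) α with hε
  have hεpos : ∀ n : ℕ, 0 < n → 0 < ε n := fun n hn =>
    Real.rpow_pos_of_pos (by exact_mod_cast hn) _
  have hb : ∀ n : ℕ, 0 < n → ∀ x, μP (Metric.ball x (4 * ε n)) ≤
      ENNReal.ofReal (D * (2 * (4 * ε n)) ^ (r - 1)) := by
    intro n hn x
    rw [hμP]
    exact muP_ball f D hD0 hf' x (by have := hεpos n hn; positivity)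
  have hmpos : ∀ n : ℕ, 0 < n → 0 < m n := fun n hn => by
    have : (0:ℝ) < n := by exact_mod_cast hn
    rw [hm, Nat.ceil_pos]; positivity
  have hlpos : ∀ n : ℕ, 0 < n → 0 < l n := fun n hn => by
    have : (0:ℝ) < n := by exact_mod_cast hn
    rw [hl, Nat.ceil_pos]; positivity
  have hlim : Tendsto (fun n : ℕ => D * 8 ^ (r - 1) * (n : ℝ) ^ (-(((r - 1 : ℕ) : ℝ) * α / 4)) +
      (2 * r * ((n : ℝ) * Real.exp (-(2 * c) * (n : ℝ) ^ (α / 2))) +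
        2 * r * Real.exp (-(2 * c') * (n : ℝ) ^ (α / 2)))) atTop (nhds 0) := by
    have hdα : 0 < ((r - 1 : ℕ) : ℝ) * α / 4 := by
      have : (0:ℝ) < ((r - 1 : ℕ) : ℝ) := by exact_mod_cast hd
      positivity
    have t1 := ((tendsto_rpow_neg_atTop hdα).comp tendsto_natCast_atTop_atTop).const_mul
      (D * 8 ^ (r - 1))
    have t2 := (tendsto_mul_exp (a := 2 * c) (s := α / 2) (by positivity) (by positivity)).const_mul
      (2 * (r : ℝ))
    have t3 := (tendsto_exp' (a := 2 * c') (s := α / 2) (by positivity) (by positivity)).const_mul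
      (2 * (r : ℝ))
    simpa using t1.add (t2.add t3)
  refine squeeze_zero' (Eventually.of_forall fun n => ?_) ?_ hlim
  · split_ifs
    · refine Real.sInf_nonneg ?_
      rintro e ⟨g, _, rfl⟩
      exact ENNReal.toReal_nonneg
    · exact le_rfl
  filter_upwards [eventually_gt_atTop 0] with n hn
  rw [dif_pos hn]
  have hεn := hεpos n hn
  have hlaw := law_bad hr (hmpos n hn) (hlpos n hn) μP hs hεn (hb n hn) ⟨0, hn⟩
  have hμbad : μ n {ω | estim ⟨0, hn⟩ (k n hn) (ε n) (W n ω, fun v => X n ω ((prm n ω).symm v))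
      ≠ X n ω ⟨0, hn⟩ (k n hn)} ≤ rStateLaw n (m n) (l n) r μP (badSet n (m n) (l n) r ⟨0, hn⟩ (ε n)) := by
    calc _ ≤ μ n (⋃ σ : Equiv.Perm (Fin n), {ω | prm n ω = σ ∧ (P n ω, X n ω, W n ω) ∈
            badSet n (m n) (l n) r ⟨0, hn⟩ (ε n)}) := by
          refine measure_mono fun ω hω => ?_
          have := estim_good ⟨0, hn⟩ (k n hn) hεn (P n ω) (X n ω) (W n ω) (prm n ω) hω
          simpa using this
      _ ≤ ∑ σ : Equiv.Perm (Fin n), μ n {ω | prm n ω = σ ∧ (P n ω, X n ω, W n ω) ∈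
            badSet n (m n) (l n) r ⟨0, hn⟩ (ε n)} := measure_iUnion_fintype_le _ _
      _ = _ := by
          simp_rw [fun σ => hjoint n σ _ (badSet_meas n (m n) (l n) r ⟨0, hn⟩ (ε n))]
          rw [Finset.sum_const, Finset.card_univ, Fintype.card_perm, Fintype.card_fin,
            nsmul_eq_mul, ← mul_assoc, ENNReal.mul_inv_cancel, one_mul]
          · exact_mod_cast n.factorial_ne_zero
          · exact ENNReal.natCast_ne_top _
  refine le_trans (csInf_le (a := (μ n {ω | estim ⟨0, hn⟩ (k n hn) (ε n)
      (W n ω, fun v => X n ω ((prm n ω).symm v)) ≠ X n ω ⟨0, hn⟩ (k n hn)}).toReal) ⟨0, ?_⟩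
      ⟨estim ⟨0, hn⟩ (k n hn) (ε n), measurable_of_countable _, rfl⟩) ?_
  · rintro e ⟨g, _, rfl⟩
    exact ENNReal.toReal_nonneg
  have hle := hμbad.trans hlaw
  have hB0 : 0 ≤ D * (2 * (4 * ε n)) ^ (r - 1) := by positivity
  have hreal : (n : ℝ≥0∞) * ENNReal.ofReal (D * (2 * (4 * ε n)) ^ (r - 1)) +
      (n * r * ENNReal.ofReal (2 * Real.exp (-2 * m n * ε n ^ 2)) +
        r * ENNReal.ofReal (2 * Real.exp (-2 * l n * ε n ^ 2))) =
      ENNReal.ofReal (n * (D * (2 * (4 * ε n)) ^ (r - 1)) +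
        (n * r * (2 * Real.exp (-2 * m n * ε n ^ 2)) + r * (2 * Real.exp (-2 * l n * ε n ^ 2)))) := by
    rw [ENNReal.ofReal_add (by positivity) (by positivity),
      ENNReal.ofReal_add (by positivity) (by positivity),
      ENNReal.ofReal_mul (p := (n:ℝ) * r) (by positivity),
      ENNReal.ofReal_mul (p := (n:ℝ)) (q := D * _) (by positivity),
      ENNReal.ofReal_mul (p := (n:ℝ)) (q := (r:ℝ)) (by positivity),
      ENNReal.ofReal_mul (p := (r:ℝ)) (by positivity), ENNReal.ofReal_natCast,
      ENNReal.ofReal_natCast]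
  rw [hreal] at hle
  refine (ENNReal.toReal_le_of_le_ofReal (by positivity) hle).trans ?_
  refine add_le_add (le_of_eq ?_) (add_le_add ?_ ?_)
  · rw [← epsn_pow hd α hn, ← hε]
    have : 2 * (4 * ε n) = 8 * ε n := by ring
    rw [this, mul_pow]; ring
  · have := epsn_sq hd α hn (hm n)
    rw [← hε] at this
    have h2 : Real.exp (-2 * m n * ε n ^ 2) ≤ Real.exp (-(2 * c) * (n : ℝ) ^ (α / 2)) :=
      Real.exp_le_exp.2 (by linarith)
    calc _ = 2 * r * (n * Real.exp (-2 * m n * ε n ^ 2)) := by ring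
      _ ≤ _ := by gcongr
  · have := epsn_sq hd α hn (hl n)
    rw [← hε] at this
    have h2 : Real.exp (-2 * l n * ε n ^ 2) ≤ Real.exp (-(2 * c') * (n : ℝ) ^ (α / 2)) :=
      Real.exp_le_exp.2 (by linarith)
    calc _ = 2 * r * Real.exp (-2 * l n * ε n ^ 2) := by ring
      _ ≤ _ := by gcongr
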